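/- Let G be a hyperbolic group and let h ∈ G be an element of infinite order. Then the cyclic subgroup ⟨h⟩ has finite index in the centralizer Z_G(h) = {g ∈ G | g h = h g} of h. -/

import Mathlib

/-- The word metric on a group `G` with respect to a generating set `S`:
`wordDist S g h` is the least length of a word in `S ∪ S⁻¹` representing `g⁻¹ * h`. -/
noncomputable def wordDist {G : Type*} [Group G] (S : Set G) (g h : G) : ℝ :=
  sInf {r : ℝ | ∃ l : List G, (∀ x ∈ l, x ∈ S ∨ x⁻¹ ∈ S) ∧ l.prod = g⁻¹ * h ∧ r = l.length}

/-- The Gromov product `(x|y)_w` with respect to the word metric for `S`. -/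
noncomputable def gromovProd {G : Type*} [Group G] (S : Set G) (w x y : G) : ℝ :=
  (wordDist S x w + wordDist S y w - wordDist S x y) / 2

/-- A group is (Gromov) hyperbolic if it admits a finite generating set `S` such that
the word metric `d_S` satisfies the Gromov product four-point condition for some `δ ≥ 0`. -/
def IsHyperbolicGroup (G : Type*) [Group G] : Prop :=
  ∃ S : Set G, S.Finite ∧ Subgroup.closure S = ⊤ ∧
    ∃ δ : ℝ, 0 ≤ δ ∧ ∀ w x y z : G,
      gromovProd S w x y ≥ min (gromovProd S w x z) (gromovProd S w y z) - δ

/-!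
Let `G` act by isometries on a Gromov hyperbolic space with coarse midpoints, such that the number
of elements moving a point by at most `r` is bounded independently of the point, and let `h` be a
central element of infinite order. An element `g` moves `o` and `h ^ n • o` by the same amount,
so if this amount is at most `R` and `n` is large, then `g` maps a midpoint `m` of `o` and
`h ^ n • o` close to a geodesic between them. Points close to a geodesic are determined up to a
bounded error by their distance to `o`, and `dist o (g • m)` takes values in an interval of length
`2 * R`; hence the number of such `g` grows at most linearly with `R`. The powers of `h` already
grow linearly, so that only finitely many cosets of `⟨h⟩` fit into `G`.

For a hyperbolic group, this applies to the left multiplication action of the centralizer of `h`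
on the group with its word metric.
-/

section GromovHyperbolic

variable {X : Type*} [PseudoMetricSpace X] {δ ε : ℝ} {o o' a a' p q x y m : X}

/-- The Gromov product `(x|y)_w` in a metric space; `gromovProd` is its instance for the word
metric of a group. A bound `(x|y)_w ≤ ε` expresses that `w` is close to a geodesic between `x` and
`y`. -/
noncomputable def gromovProduct (w x y : X) : ℝ :=
  (dist x w + dist y w - dist x y) / 2

/-- Gromov's four-point condition with constant `δ`. -/
def IsGromovHyperbolic (X : Type*) [PseudoMetricSpace X] (δ : ℝ) : Prop :=
  ∀ w x y z : X, min (gromovProduct w x z) (gromovProduct w y z) - δ ≤ gromovProduct w x y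

/-- Any two points have a midpoint up to an additive error `ε`. This replaces the existence of
geodesics, which fails in a group with a word metric. -/
def HasCoarseMidpoints (X : Type*) [PseudoMetricSpace X] (ε : ℝ) : Prop :=
  ∀ x y : X, ∃ m : X, dist x m ≤ dist x y / 2 + ε ∧ dist m y ≤ dist x y / 2 + ε

lemma gromovProduct_comm (w x y : X) : gromovProduct w x y = gromovProduct w y x := by
  rw [gromovProduct, gromovProduct, dist_comm x y, add_comm (dist x w)]

lemma dist_sub_dist_le_gromovProduct (w x y : X) : dist x w - dist x y ≤ gromovProduct w x y := by
  have := dist_triangle x y w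
  rw [gromovProduct]
  linarith

lemma gromovProduct_le_of_dist_le_half_add (hx : dist x m ≤ dist x y / 2 + ε)
    (hy : dist m y ≤ dist x y / 2 + ε) : gromovProduct m x y ≤ ε := by
  rw [gromovProduct, dist_comm y m]
  linarith

namespace IsGromovHyperbolic

lemma nonneg [Nonempty X] (hX : IsGromovHyperbolic X δ) : 0 ≤ δ := by
  inhabit X
  simpa using hX default default default default

lemma min_gromovProduct_sub_le [Nonempty X] (hX : IsGromovHyperbolic X δ) (w x z t y : X) :
    min (gromovProduct w x z) (min (gromovProduct w z t) (gromovProduct w t y)) - 2 * δ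
      ≤ gromovProduct w x y := by
  have := hX.nonneg
  have hxy := hX w x y z
  have hzy := hX w y z t
  grind [gromovProduct_comm]

lemma gromovProduct_le_of_endpoints_close (hX : IsGromovHyperbolic X δ)
    (hq : gromovProduct q o' a' ≤ ε) (ho : dist o' o + ε + 2 * δ < dist o' q)
    (ha : dist a' a + ε + 2 * δ < dist a' q) : gromovProduct q o a ≤ ε + 2 * δ := by
  have : Nonempty X := ⟨q⟩
  have hmin := hX.min_gromovProduct_sub_le q o' o a a'
  have hoo' := dist_sub_dist_le_gromovProduct q o' o
  have haa' := dist_sub_dist_le_gromovProduct q a' a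
  rw [gromovProduct_comm q a' a] at haa'
  grind

lemma dist_le_abs_sub_add (hX : IsGromovHyperbolic X δ) (hp : gromovProduct p o a ≤ ε)
    (hq : gromovProduct q o a ≤ ε) :
    dist p q ≤ |dist o p - dist o q| + 2 * (ε + δ) := by
  have hmin := hX q o a p
  have hpos := le_abs_self (dist o p - dist o q)
  have hneg := neg_le_abs (dist o p - dist o q)
  simp only [gromovProduct] at hmin hp hq
  grind

end IsGromovHyperbolic

end GromovHyperbolic

section IsometricAction

variable {G X : Type*} [Group G] [PseudoMetricSpace X] [MulAction G X] {δ ε : ℝ} {h : G}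

/-- For every `r`, the number of elements moving a point by at most `r` is bounded uniformly in
the point. -/
def IsUniformlyProper (G X : Type*) [PseudoMetricSpace X] [SMul G X] : Prop :=
  ∀ r : ℝ, ∃ N : ℕ, ∀ x : X, {g : G | dist x (g • x) ≤ r}.encard ≤ N

/-- The number of elements moving `o` by at most `R` is at most linear in `R`. -/
def HasLinearGrowth (G : Type*) {X : Type*} [PseudoMetricSpace X] [SMul G X] (o : X) : Prop :=
  ∃ N : ℕ, ∀ R : ℕ, {g : G | dist o (g • o) ≤ R}.encard ≤ (N * (R + 1) : ℕ)

lemma card_le_of_subset_of_encard_le {α : Type*} {F : Finset α} {s : Set α} {n : ℕ}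
    (hF : (F : Set α) ⊆ s) (hs : s.encard ≤ n) : F.card ≤ n := by
  have := (Set.encard_le_encard hF).trans hs
  rwa [Set.encard_coe_eq_coe_finsetCard, Nat.cast_le] at this

instance isIsometricSMul_subgroup [IsIsometricSMul G X] (H : Subgroup G) : IsIsometricSMul H X :=
  ⟨fun g ↦ isometry_smul X (g : G)⟩

lemma IsUniformlyProper.subgroup (hG : IsUniformlyProper G X) (H : Subgroup G) :
    IsUniformlyProper H X := by
  intro r
  obtain ⟨N, hN⟩ := hG r
  refine ⟨N, fun x ↦ le_trans ?_ (hN x)⟩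
  exact Set.encard_le_encard_of_injOn (fun _ hg ↦ hg) H.subtype_injective.injOn

lemma IsUniformlyProper.finite_setOf_dist_smul_le (hG : IsUniformlyProper G X) (x : X) (r : ℝ) :
    {g : G | dist x (g • x) ≤ r}.Finite := by
  obtain ⟨N, hN⟩ := hG r
  exact Set.finite_of_encard_le_coe (hN x)

lemma IsUniformlyProper.exists_lt_dist_pow_smul (hG : IsUniformlyProper G X)
    (hord : ¬IsOfFinOrder h) (x : X) (r : ℝ) : ∃ n : ℕ, r < dist x (h ^ n • x) := by
  by_contra! hle
  have hfin := (hG.finite_setOf_dist_smul_le x r).subset (Set.range_subset_iff.2 hle)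
  exact Set.infinite_range_of_injective (injective_pow_iff_not_isOfFinOrder.2 hord) hfin

variable [IsIsometricSMul G X]

lemma dist_mul_smul_le_add (g k : G) (x : X) :
    dist x ((g * k) • x) ≤ dist x (g • x) + dist x (k • x) := by
  have := dist_triangle x (g • x) (g • k • x)
  rwa [dist_smul, smul_smul] at this

lemma dist_pow_smul_le (g : G) (x : X) (n : ℕ) : dist x (g ^ n • x) ≤ n * dist x (g • x) := by
  induction n with
  | zero => simp
  | succ n ih =>
    have := dist_mul_smul_le_add (g ^ n) g x
    rw [pow_succ]
    push_cast
    linarith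

lemma abs_dist_smul_sub_dist_le (g : G) (x y : X) :
    |dist x (g • y) - dist x y| ≤ dist x (g • x) := by
  simpa using abs_dist_sub_le x (g • x) (g • y)

lemma gromovProduct_smul (g : G) (w x y : X) :
    gromovProduct (g • w) (g • x) (g • y) = gromovProduct w x y := by
  simp only [gromovProduct, dist_smul]

lemma IsGromovHyperbolic.gromovProduct_smul_le_of_commute (hX : IsGromovHyperbolic X δ) {g k : G}
    (hgk : Commute g k) {o m : X} (hm : gromovProduct m o (k • o) ≤ ε)
    (ho : dist o (g • o) + ε + 2 * δ < dist o m)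
    (hko : dist o (g • o) + ε + 2 * δ < dist (k • o) m) :
    gromovProduct (g • m) o (k • o) ≤ ε + 2 * δ := by
  have hdist : dist (g • k • o) (k • o) = dist o (g • o) := by
    rw [smul_smul, hgk.eq, mul_smul, dist_smul, dist_comm]
  apply hX.gromovProduct_le_of_endpoints_close (o' := g • o) (a' := g • k • o)
  · rwa [gromovProduct_smul]
  · rwa [dist_smul, dist_comm]
  · rwa [dist_smul, hdist]

lemma IsGromovHyperbolic.exists_gromovProduct_smul_le (hX : IsGromovHyperbolic X δ)
    (hmid : HasCoarseMidpoints X ε) (hG : IsUniformlyProper G X) (hh : h ∈ Subgroup.center G)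
    (hord : ¬IsOfFinOrder h) (o : X) (R : ℝ) :
    ∃ m a : X, ∀ g : G, dist o (g • o) ≤ R → gromovProduct (g • m) o a ≤ ε + 2 * δ := by
  obtain ⟨n, hn⟩ := hG.exists_lt_dist_pow_smul hord o (2 * (R + 2 * ε + 2 * δ))
  obtain ⟨m, hom, hma⟩ := hmid o (h ^ n • o)
  have htri := dist_triangle o m (h ^ n • o)
  refine ⟨m, h ^ n • o, fun g hg ↦ ?_⟩
  have hcomm : Commute g (h ^ n) := Commute.pow_right (Subgroup.mem_center_iff.1 hh g) n
  apply hX.gromovProduct_smul_le_of_commute hcomm (gromovProduct_le_of_dist_le_half_add hom hma)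
  · linarith
  · rw [dist_comm _ m]
    linarith

lemma IsUniformlyProper.exists_card_le_of_dist_smul_smul_le (hG : IsUniformlyProper G X) (r : ℝ) :
    ∃ N : ℕ, ∀ (x : X) (F : Finset G), (∀ g ∈ F, ∀ k ∈ F, dist (g • x) (k • x) ≤ r) →
      F.card ≤ N := by
  classical
  obtain ⟨N, hN⟩ := hG r
  refine ⟨N, fun x F hF ↦ ?_⟩
  obtain rfl | ⟨g, hg⟩ := F.eq_empty_or_nonempty
  · simp
  rw [← Finset.card_image_of_injective F (mul_right_injective g⁻¹)]
  refine card_le_of_subset_of_encard_le ?_ (hN x)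
  simp only [Finset.coe_image, Set.image_subset_iff]
  intro k hk
  rw [Set.mem_preimage, Set.mem_ofPred_eq, ← dist_smul g, smul_smul, mul_inv_cancel_left]
  exact hF g hg k hk

theorem IsGromovHyperbolic.hasLinearGrowth_of_mem_center (hX : IsGromovHyperbolic X δ)
    (hmid : HasCoarseMidpoints X ε) (hG : IsUniformlyProper G X) (hh : h ∈ Subgroup.center G)
    (hord : ¬IsOfFinOrder h) (o : X) : HasLinearGrowth G o := by
  obtain ⟨N, hN⟩ := hG.exists_card_le_of_dist_smul_smul_le (X := X) (1 + 2 * (ε + 2 * δ + δ))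
  refine ⟨2 * N, fun R ↦ ?_⟩
  have hfin := hG.finite_setOf_dist_smul_le o R
  rw [hfin.encard_eq_coe_toFinset_card, Nat.cast_le]
  obtain ⟨m, a, hma⟩ := hX.exists_gromovProduct_smul_le hmid hG hh hord o R
  set level : G → ℤ := fun g ↦ ⌊dist o (g • m) - dist o m⌋
  have hmaps : ∀ g ∈ hfin.toFinset, level g ∈ Finset.Icc (-R : ℤ) R := by
    intro g hg
    have hgR : dist o (g • o) ≤ R := by simpa using hg
    obtain ⟨hlower, hupper⟩ := abs_le.1 ((abs_dist_smul_sub_dist_le g o m).trans hgR)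
    rw [Finset.mem_Icc, Int.le_floor, Int.floor_le_iff]
    push_cast
    exact ⟨hlower, by linarith⟩
  have hfiber : ∀ i ∈ Finset.Icc (-R : ℤ) R, (hfin.toFinset.filter (level · = i)).card ≤ N := by
    intro i _
    refine hN m _ fun g hg k hk ↦ ?_
    simp only [Finset.mem_filter, Set.Finite.mem_toFinset, Set.mem_ofPred_eq] at hg hk
    have hlt := Int.abs_sub_lt_one_of_floor_eq_floor (hg.2.trans hk.2.symm)
    rw [sub_sub_sub_cancel_right] at hlt
    linarith [hX.dist_le_abs_sub_add (hma g hg.1) (hma k hk.1)]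
  calc hfin.toFinset.card ≤ N * (Finset.Icc (-R : ℤ) R).card :=
        Finset.card_le_mul_card_image_of_maps_to hmaps N hfiber
    _ ≤ 2 * N * (R + 1) := by
        have : (Finset.Icc (-R : ℤ) R).card ≤ 2 * (R + 1) := by
          rw [Int.card_Icc]
          omega
        nlinarith

lemma out_mul_pow_injective (hord : ¬IsOfFinOrder h) :
    Function.Injective fun c : (G ⧸ Subgroup.zpowers h) × ℕ ↦ c.1.out * h ^ c.2 := by
  rintro ⟨c, i⟩ ⟨d, j⟩ heq
  have hcd : c = d := by
    simpa [QuotientGroup.mk_mul_of_mem, Subgroup.npow_mem_zpowers] using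
      congrArg (QuotientGroup.mk (s := Subgroup.zpowers h)) heq
  subst hcd
  have hij := mul_left_cancel heq
  exact Prod.ext rfl (injective_pow_iff_not_isOfFinOrder.2 hord hij)

lemma HasLinearGrowth.exists_card_quotient_zpowers_le {o : X} (hgrowth : HasLinearGrowth G o)
    (hord : ¬IsOfFinOrder h) :
    ∃ B : ℕ, ∀ Q : Finset (G ⧸ Subgroup.zpowers h), Q.card ≤ B := by
  obtain ⟨N, hN⟩ := hgrowth
  obtain ⟨D, hD⟩ := exists_nat_ge (dist o (h • o))
  refine ⟨N * D, fun Q ↦ ?_⟩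
  obtain ⟨R, hR⟩ : ∃ R : ℕ, ∀ c ∈ Q, dist o (c.out • o) ≤ R := by
    obtain ⟨b, hb⟩ := (Q.image fun c ↦ dist o (c.out • o)).exists_le
    obtain ⟨R, hR⟩ := exists_nat_ge b
    exact ⟨R, fun c hc ↦ (hb _ (Finset.mem_image_of_mem _ hc)).trans hR⟩
  have hcard (M : ℕ) : Q.card * M ≤ N * (R + M * D + 1) := by
    have hsub : ((Q ×ˢ Finset.range M).map ⟨_, out_mul_pow_injective hord⟩ : Set G) ⊆
        {g : G | dist o (g • o) ≤ (R + M * D : ℕ)} := by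
      simp only [Finset.coe_map, Set.image_subset_iff]
      rintro ⟨c, i⟩ hci
      obtain ⟨hc, hi⟩ : c ∈ Q ∧ i < M := by simpa using hci
      simp only [Function.Embedding.coeFn_mk, Set.mem_preimage, Set.mem_ofPred_eq]
      calc dist o ((c.out * h ^ i) • o) ≤ dist o (c.out • o) + dist o (h ^ i • o) :=
            dist_mul_smul_le_add _ _ o
        _ ≤ R + i * dist o (h • o) := add_le_add (hR c hc) (dist_pow_smul_le h o i)
        _ ≤ R + M * D := by gcongr
        _ = (R + M * D : ℕ) := by push_cast; rfl
    simpa using card_le_of_subset_of_encard_le hsub (hN (R + M * D))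
  by_contra! hlt
  have hle := hcard (N * (R + 1) + 1)
  have hge := Nat.mul_le_mul_right (N * (R + 1) + 1) hlt
  rw [Nat.succ_eq_add_one] at hge
  linarith

theorem HasLinearGrowth.finiteIndex_zpowers {o : X} (hgrowth : HasLinearGrowth G o)
    (hord : ¬IsOfFinOrder h) : (Subgroup.zpowers h).FiniteIndex := by
  obtain ⟨B, hB⟩ := hgrowth.exists_card_quotient_zpowers_le hord
  have : Finite (G ⧸ Subgroup.zpowers h) := (fintypeOfFinsetCardLe B hB).finite
  exact Subgroup.finiteIndex_of_finite_quotient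

lemma zpowers_mk_eq_subgroupOf {H : Subgroup G} (hh : h ∈ H) :
    Subgroup.zpowers (⟨h, hh⟩ : H) = (Subgroup.zpowers h).subgroupOf H := by
  ext g
  simp [Subgroup.mem_subgroupOf, Subgroup.mem_zpowers_iff, Subtype.ext_iff]

theorem stmt_3_general [Nonempty X] (hX : IsGromovHyperbolic X δ) (hmid : HasCoarseMidpoints X ε)
    (hG : IsUniformlyProper G X) (hord : ¬IsOfFinOrder h) :
    ((Subgroup.zpowers h).subgroupOf (Subgroup.centralizer {h})).FiniteIndex := by
  inhabit X
  have hmem : h ∈ Subgroup.centralizer {h} := Subgroup.mem_centralizer_singleton_iff.2 rfl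
  have hcenter : (⟨h, hmem⟩ : Subgroup.centralizer {h}) ∈ Subgroup.center _ :=
    Subgroup.mem_center_iff.2 fun g ↦ Subtype.ext (Subgroup.mem_centralizer_singleton_iff.1 g.2)
  have hord' : ¬IsOfFinOrder (⟨h, hmem⟩ : Subgroup.centralizer {h}) := by
    rwa [← Submonoid.isOfFinOrder_coe]
  rw [← zpowers_mk_eq_subgroupOf hmem]
  exact (hX.hasLinearGrowth_of_mem_center hmid (hG.subgroup _) hcenter hord'
    default).finiteIndex_zpowers hord'

end IsometricAction

section WordMetric

variable {G : Type*} [Group G] {S : Set G} {g h : G} {l l' : List G}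

/-- `l` is a word in the alphabet `S ∪ S⁻¹`. -/
def IsWord (S : Set G) (l : List G) : Prop :=
  ∀ x ∈ l, x ∈ S ∨ x⁻¹ ∈ S

lemma IsWord.append (hl : IsWord S l) (hl' : IsWord S l') : IsWord S (l ++ l') :=
  List.forall_mem_append.2 ⟨hl, hl'⟩

lemma IsWord.reverse_map_inv (hl : IsWord S l) : IsWord S (l.map (·⁻¹)).reverse := by
  simp only [IsWord, List.mem_reverse, List.forall_mem_map, inv_inv]
  exact fun x hx ↦ (hl x hx).symm

lemma exists_isWord_prod_eq (hS : Subgroup.closure S = ⊤) (g : G) :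
    ∃ l, IsWord S l ∧ l.prod = g := by
  have hg : g ∈ (Subgroup.closure S).toSubmonoid := by simp [hS]
  rw [Subgroup.closure_toSubmonoid] at hg
  obtain ⟨l, hl, hprod⟩ := Submonoid.exists_list_of_mem_closure hg
  exact ⟨l, fun x hx ↦ by simpa using hl x hx, hprod⟩

lemma finite_setOf_isWord_length_le (hS : S.Finite) (n : ℕ) :
    {l | IsWord S l ∧ l.length ≤ n}.Finite := by
  have : Finite {x : G | x ∈ S ∨ x⁻¹ ∈ S} := hS.union (hS.preimage inv_injective.injOn)
  refine ((List.finite_length_le {x : G | x ∈ S ∨ x⁻¹ ∈ S} n).image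
    (List.map Subtype.val)).subset ?_
  rintro l ⟨hl, hlen⟩
  lift l to List {x : G | x ∈ S ∨ x⁻¹ ∈ S} using hl
  exact ⟨l, (List.length_map Subtype.val).symm.trans_le hlen, rfl⟩

lemma wordDist_le_length (hl : IsWord S l) (hprod : l.prod = g⁻¹ * h) :
    wordDist S g h ≤ l.length :=
  csInf_le ⟨0, by rintro _ ⟨l, -, -, rfl⟩; positivity⟩ ⟨l, hl, hprod, rfl⟩

lemma exists_isWord_wordDist_eq_length (hS : Subgroup.closure S = ⊤) (g h : G) :
    ∃ l, IsWord S l ∧ l.prod = g⁻¹ * h ∧ wordDist S g h = l.length := by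
  obtain ⟨l, ⟨hl, hprod⟩, hmin⟩ := exists_minimalFor_of_wellFoundedLT
    (fun l ↦ IsWord S l ∧ l.prod = g⁻¹ * h) List.length (exists_isWord_prod_eq hS _)
  refine ⟨l, hl, hprod, IsLeast.csInf_eq ⟨⟨l, hl, hprod, rfl⟩, ?_⟩⟩
  rintro _ ⟨l', hl', hprod', rfl⟩
  exact_mod_cast (le_total _ _).elim id (hmin ⟨hl', hprod'⟩)

lemma wordDist_self (S : Set G) (g : G) : wordDist S g g = 0 := by
  apply le_antisymm
  · simpa using wordDist_le_length (S := S) (g := g) (h := g) (l := []) (by simp [IsWord]) (by simp)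
  · exact Real.sInf_nonneg (by rintro _ ⟨l, -, -, rfl⟩; positivity)

lemma wordDist_mul_left (S : Set G) (k g h : G) :
    wordDist S (k * g) (k * h) = wordDist S g h := by
  simp only [wordDist, mul_inv_rev, mul_assoc, inv_mul_cancel_left]

lemma wordDist_comm_le (hS : Subgroup.closure S = ⊤) (g h : G) :
    wordDist S g h ≤ wordDist S h g := by
  obtain ⟨l, hl, hprod, hlen⟩ := exists_isWord_wordDist_eq_length hS h g
  rw [hlen, ← List.length_map (·⁻¹), ← List.length_reverse]
  apply wordDist_le_length hl.reverse_map_inv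
  rw [← List.prod_inv_reverse, hprod, mul_inv_rev, inv_inv]

lemma wordDist_comm (hS : Subgroup.closure S = ⊤) (g h : G) : wordDist S g h = wordDist S h g :=
  le_antisymm (wordDist_comm_le hS g h) (wordDist_comm_le hS h g)

lemma wordDist_triangle (hS : Subgroup.closure S = ⊤) (g h k : G) :
    wordDist S g k ≤ wordDist S g h + wordDist S h k := by
  obtain ⟨l, hl, hprod, hlen⟩ := exists_isWord_wordDist_eq_length hS g h
  obtain ⟨l', hl', hprod', hlen'⟩ := exists_isWord_wordDist_eq_length hS h k
  rw [hlen, hlen', ← Nat.cast_add, ← List.length_append]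
  apply wordDist_le_length (hl.append hl')
  rw [List.prod_append, hprod, hprod', mul_assoc, mul_inv_cancel_left]

lemma finite_setOf_wordDist_one_le (hfin : S.Finite) (hS : Subgroup.closure S = ⊤) (r : ℝ) :
    {g : G | wordDist S 1 g ≤ r}.Finite := by
  refine ((finite_setOf_isWord_length_le hfin ⌊r⌋₊).image List.prod).subset fun g hg ↦ ?_
  obtain ⟨l, hl, hprod, hlen⟩ := exists_isWord_wordDist_eq_length hS 1 g
  exact ⟨l, ⟨hl, Nat.le_floor (hlen ▸ hg)⟩, by simpa using hprod⟩

/-- A copy of the group `G`, equipped with the word metric of the generating set `S`. The proof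
that `S` generates is a parameter of the type, because without it `wordDist S` is not a metric. -/
def WordMetricSpace (_hS : Subgroup.closure S = ⊤) : Type _ := G

namespace WordMetricSpace

variable (hS : Subgroup.closure S = ⊤)

noncomputable instance : PseudoMetricSpace (WordMetricSpace hS) where
  dist (g h : G) := wordDist S g h
  dist_self (g : G) := wordDist_self S g
  dist_comm (g h : G) := wordDist_comm hS g h
  dist_triangle (g h k : G) := wordDist_triangle hS g h k

instance : Nonempty (WordMetricSpace hS) := inferInstanceAs (Nonempty G)

instance : MulAction G (WordMetricSpace hS) := inferInstanceAs (MulAction G G)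

instance : IsIsometricSMul G (WordMetricSpace hS) :=
  ⟨fun k ↦ Isometry.of_dist_eq (wordDist_mul_left S k)⟩

lemma hasCoarseMidpoints : HasCoarseMidpoints (WordMetricSpace hS) (1 / 2) := by
  intro (g : G) (h : G)
  obtain ⟨l, hl, hprod, hlen⟩ := exists_isWord_wordDist_eq_length hS g h
  set n := l.length / 2
  have htake : wordDist S g (g * (l.take n).prod) ≤ (l.take n).length :=
    wordDist_le_length (fun x hx ↦ hl x (List.mem_of_mem_take hx)) (by simp)
  have hdrop : wordDist S (g * (l.take n).prod) h ≤ (l.drop n).length := by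
    apply wordDist_le_length fun x hx ↦ hl x (List.mem_of_mem_drop hx)
    rw [eq_inv_mul_iff_mul_eq, mul_assoc, List.prod_take_mul_prod_drop, hprod, mul_inv_cancel_left]
  have htake_length : ((l.take n).length : ℝ) ≤ l.length / 2 := by
    rw [le_div_iff₀ two_pos]
    exact_mod_cast (by grind : (l.take n).length * 2 ≤ l.length)
  have hdrop_length : ((l.drop n).length : ℝ) ≤ l.length / 2 + 1 / 2 := by
    rw [← add_div, le_div_iff₀ two_pos]
    exact_mod_cast (by grind : (l.drop n).length * 2 ≤ l.length + 1)
  refine ⟨g * (l.take n).prod, ?_, ?_⟩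
  · change wordDist S g (g * (l.take n).prod) ≤ wordDist S g h / 2 + 1 / 2
    linarith
  · change wordDist S (g * (l.take n).prod) h ≤ wordDist S g h / 2 + 1 / 2
    linarith

lemma isUniformlyProper (hfin : S.Finite) : IsUniformlyProper G (WordMetricSpace hS) := by
  intro r
  have hball := finite_setOf_wordDist_one_le hfin hS r
  refine ⟨hball.toFinset.card, fun (x : G) ↦ ?_⟩
  rw [← hball.encard_eq_coe_toFinset_card]
  refine Set.encard_le_encard_of_injOn (f := fun g ↦ x⁻¹ * (g * x)) (fun g hg ↦ ?_)
    fun g _ k _ hgk ↦ mul_right_cancel (mul_left_cancel hgk)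
  change wordDist S 1 (x⁻¹ * (g * x)) ≤ r
  rw [← wordDist_mul_left S x, mul_one, mul_inv_cancel_left]
  exact hg

end WordMetricSpace

end WordMetric

/-- In a hyperbolic group, the cyclic subgroup `⟨h⟩` generated by an element of infinite
order has finite index in the centralizer of `h`. -/
theorem stmt_3 {G : Type*} [Group G] (hG : IsHyperbolicGroup G)
    (h : G) (hord : ∀ n : ℤ, n ≠ 0 → h ^ n ≠ 1) :
    ((Subgroup.zpowers h).subgroupOf (Subgroup.centralizer {h})).FiniteIndex := by
  obtain ⟨S, hfin, hS, δ, -, hδ⟩ := hG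
  have hX : IsGromovHyperbolic (WordMetricSpace hS) δ := hδ
  have hord' : ¬IsOfFinOrder h := by
    rw [isOfFinOrder_iff_zpow_eq_one]
    rintro ⟨n, hn, hpow⟩
    exact hord n hn hpow
  exact stmt_3_general hX (WordMetricSpace.hasCoarseMidpoints hS)
    (WordMetricSpace.isUniformlyProper hS hfin) hord'
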